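/- arXiv:2205.05068 — 4 statements merged into one kernel-verified Lean document; each statement's English description precedes it below -/
import Mathlib

section
/- Under the converse setup, for every i ∈ {1,…,n} the triple (Y^{i−1}, X^{i−1}, Z^{i−1}) is conditionally independent of (X̃_i, W) given (X̃^{i−1}, Y_i^n, K); i.e., (Y^{i−1}, X^{i−1}, Z^{i−1}) − (X̃^{i−1}, Y_i^n, K) − (X̃_i, W) forms a Markov chain. -/
open MeasureTheory

noncomputable section

/-- Probability mass `P[X = x]` of a finitely-valued random variable `X` on `(Ω, μ)`. -/
def pmass {Ω : Type*} [MeasurableSpace Ω] (μ : Measure Ω) {α : Type*}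
    (X : Ω → α) (x : α) : ℝ :=
  (μ (X ⁻¹' {x})).toReal

/-- Shannon entropy `H(X)` (in nats) of a finitely-valued random variable. -/
def entropyRV {Ω : Type*} [MeasurableSpace Ω] (μ : Measure Ω) {α : Type*} [Fintype α]
    (X : Ω → α) : ℝ :=
  ∑ x : α, Real.negMulLog (pmass μ X x)

/-- Conditional Shannon entropy `H(X | Y)`. -/
def condEntropyRV {Ω : Type*} [MeasurableSpace Ω] (μ : Measure Ω) {α β : Type*}
    [Fintype α] [Fintype β] (X : Ω → α) (Y : Ω → β) : ℝ :=
  entropyRV μ (fun ω => (X ω, Y ω)) - entropyRV μ Y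

/-- Mutual information `I(X;Y)`. -/
def mutualInfoRV {Ω : Type*} [MeasurableSpace Ω] (μ : Measure Ω) {α β : Type*}
    [Fintype α] [Fintype β] (X : Ω → α) (Y : Ω → β) : ℝ :=
  entropyRV μ X + entropyRV μ Y - entropyRV μ (fun ω => (X ω, Y ω))

/-- Conditional mutual information `I(X;Y|Z)`. -/
def condMutualInfoRV {Ω : Type*} [MeasurableSpace Ω] (μ : Measure Ω) {α β γ : Type*}
    [Fintype α] [Fintype β] [Fintype γ] (X : Ω → α) (Y : Ω → β) (Z : Ω → γ) : ℝ :=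
  entropyRV μ (fun ω => (X ω, Z ω)) + entropyRV μ (fun ω => (Y ω, Z ω))
    - entropyRV μ Z - entropyRV μ (fun ω => (X ω, Y ω, Z ω))

/-- Expected value `E[f(X)]` of a function of a finitely-valued random variable. -/
def expVal {Ω : Type*} [MeasurableSpace Ω] (μ : Measure Ω) {α : Type*} [Fintype α]
    (X : Ω → α) (f : α → ℝ) : ℝ :=
  ∑ a : α, pmass μ X a * f a

/-- Independence of two finitely-valued random variables, via their joint mass. -/
def IndepRV {Ω : Type*} [MeasurableSpace Ω] (μ : Measure Ω) {α β : Type*}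
    (X : Ω → α) (Y : Ω → β) : Prop :=
  ∀ a b, pmass μ (fun ω => (X ω, Y ω)) (a, b) = pmass μ X a * pmass μ Y b

/-- Conditional independence of `A` and `C` given `B` (the Markov chain `A − B − C`)
for finitely-valued random variables, via joint masses. -/
def CondIndepRV {Ω : Type*} [MeasurableSpace Ω] (μ : Measure Ω) {α β γ : Type*}
    (A : Ω → α) (B : Ω → β) (C : Ω → γ) : Prop :=
  ∀ a b c,
    pmass μ (fun ω => (A ω, B ω, C ω)) (a, b, c) * pmass μ B b
      = pmass μ (fun ω => (A ω, B ω)) (a, b) * pmass μ (fun ω => (B ω, C ω)) (b, c)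

/-- `X` is uniformly distributed on its (finite) alphabet. -/
def UniformRV {Ω : Type*} [MeasurableSpace Ω] (μ : Measure Ω) {α : Type*} [Fintype α]
    (X : Ω → α) : Prop :=
  ∀ x, pmass μ X x = 1 / (Fintype.card α : ℝ)

/-- The sequence `S = (S_1, …, S_n)` is i.i.d. with single-letter pmf `p`. -/
def HasIIDLaw {Ω : Type*} [MeasurableSpace Ω] (μ : Measure Ω) {α : Type*} {n : ℕ}
    (S : Ω → Fin n → α) (p : α → ℝ) : Prop :=
  ∀ v : Fin n → α, pmass μ S v = ∏ i, p (v i)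

/-- `[a]⁻ = min {a, 0}`. -/
def negPartR (a : ℝ) : ℝ := min a 0

open Classical in
theorem core_rect {Ω : Type*} [MeasurableSpace Ω] (μ : Measure Ω) [IsProbabilityMeasure μ]
    {α β κ : Type*} [Fintype α] [Fintype β] [Fintype κ]
    (P : Ω → α) (F : Ω → β) (K : Ω → κ) (m : α → ℝ) (q : β → ℝ) (r : κ → ℝ)
    (hm : ∀ p f k, MeasurableSet {ω | P ω = p ∧ F ω = f ∧ K ω = k})
    (h : ∀ p f k, μ.real {ω | P ω = p ∧ F ω = f ∧ K ω = k} = m p * q f * r k)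
    (U : α → Prop) (V : β → Prop) (k : κ) :
    μ.real {ω | U (P ω) ∧ V (F ω) ∧ K ω = k}
      = (∑ p with U p, m p) * (∑ f with V f, q f) * r k := by
  have e : {ω | U (P ω) ∧ V (F ω) ∧ K ω = k} =
      (fun ω => (P ω, F ω, K ω)) ⁻¹'
        (((Finset.univ.filter U) ×ˢ ((Finset.univ.filter V) ×ˢ ({k} : Finset κ)) :
          Finset (α × β × κ)) : Set (α × β × κ)) := by
    ext ω; simp [eq_comm]
  have e2 : ∀ y : α × β × κ, (fun ω => (P ω, F ω, K ω)) ⁻¹' {y} =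
      {ω | P ω = y.1 ∧ F ω = y.2.1 ∧ K ω = y.2.2} := by
    rintro ⟨p, f, k⟩; ext ω; simp
  rw [e, ← sum_measureReal_preimage_singleton _ (fun y _ => by rw [e2]; exact hm _ _ _)]
  simp_rw [e2, h]
  rw [Finset.sum_product, Finset.sum_mul_sum, Finset.sum_mul]
  refine Finset.sum_congr rfl fun p _ => ?_
  rw [Finset.sum_product, Finset.sum_mul]
  simp

/-- Under the converse setup, for every `i` the triple `(Y^{i−1}, X^{i−1}, Z^{i−1})`
is conditionally independent of `(X̃ᵢ, W)` given `(X̃^{i−1}, Yᵢⁿ, K)`. -/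
theorem past_blocks_condIndep
    {𝒳 𝒳t 𝒴 𝒵 𝒲 𝒦 : Type}
    [Fintype 𝒳] [Fintype 𝒳t] [Fintype 𝒴] [Fintype 𝒵] [Fintype 𝒲] [Fintype 𝒦]
    [MeasurableSpace 𝒳] [DiscreteMeasurableSpace 𝒳]
    [MeasurableSpace 𝒳t] [DiscreteMeasurableSpace 𝒳t]
    [MeasurableSpace 𝒴] [DiscreteMeasurableSpace 𝒴]
    [MeasurableSpace 𝒵] [DiscreteMeasurableSpace 𝒵]
    [MeasurableSpace 𝒲] [DiscreteMeasurableSpace 𝒲]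
    [MeasurableSpace 𝒦] [DiscreteMeasurableSpace 𝒦]
    {Ω : Type} [MeasurableSpace Ω] (μ : MeasureTheory.Measure Ω)
    [MeasureTheory.IsProbabilityMeasure μ]
    {n : ℕ} (S : Ω → Fin n → 𝒳t × 𝒳 × 𝒴 × 𝒵) (K : Ω → 𝒦)
    (hSmeas : Measurable S) (hKmeas : Measurable K)
    (pX : 𝒳 → ℝ) (pXt : 𝒳 → 𝒳t → ℝ) (pYZ : 𝒳 → 𝒴 × 𝒵 → ℝ)
    (hpX0 : ∀ x, 0 ≤ pX x) (hpX1 : ∑ x, pX x = 1)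
    (hpXt0 : ∀ x a, 0 ≤ pXt x a) (hpXt1 : ∀ x, ∑ a, pXt x a = 1)
    (hpYZ0 : ∀ x yz, 0 ≤ pYZ x yz) (hpYZ1 : ∀ x, ∑ yz, pYZ x yz = 1)
    (hiid : HasIIDLaw μ S (fun s => pX s.2.1 * pXt s.2.1 s.1 * pYZ s.2.1 s.2.2))
    (hKunif : UniformRV μ K) (hKind : IndepRV μ K S)
    (enc : (Fin n → 𝒳t) → 𝒦 → 𝒲)
    :
    ∀ i : Fin n,
      CondIndepRV μ
        (fun ω => ((fun j : {j : Fin n // j.1 < i} => (S ω j.1).2.2.1), (fun j : {j : Fin n // j.1 < i} => (S ω j.1).2.1), (fun j : {j : Fin n // j.1 < i} => (S ω j.1).2.2.2)))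
        (fun ω => ((fun j : {j : Fin n // j.1 < i} => (S ω j.1).1), (fun j : {j : Fin n // i ≤ j} => (S ω j.1).2.2.1), K ω))
        (fun ω => ((S ω i).1, enc (fun j => (S ω j).1) (K ω))) := by
  classical
  intro i
  rintro ⟨ay, ax, az⟩ ⟨t, y, k⟩ ⟨cx, cw⟩
  set w : 𝒳t × 𝒳 × 𝒴 × 𝒵 → ℝ := fun s => pX s.2.1 * pXt s.2.1 s.1 * pYZ s.2.1 s.2.2 with hw
  let P : Ω → ({j : Fin n // j.1 < i.1} → 𝒳t × 𝒳 × 𝒴 × 𝒵) := fun ω j => S ω j.1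
  let F : Ω → ({j : Fin n // ¬ j.1 < i.1} → 𝒳t × 𝒳 × 𝒴 × 𝒵) := fun ω j => S ω j.1
  have key : ∀ p f k', {ω | P ω = p ∧ F ω = f ∧ K ω = k'} =
      (fun ω => (K ω, S ω)) ⁻¹' {(k', (Equiv.piEquivPiSubtypeProd (fun j : Fin n => j.1 < i.1)
        (fun _ => 𝒳t × 𝒳 × 𝒴 × 𝒵)).symm (p, f))} := by
    intro p f k'
    ext ω
    have : (S ω = (Equiv.piEquivPiSubtypeProd (fun j : Fin n => j.1 < i.1)
        (fun _ => 𝒳t × 𝒳 × 𝒴 × 𝒵)).symm (p, f)) ↔ (P ω = p ∧ F ω = f) := by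
      rw [Equiv.eq_symm_apply, Prod.ext_iff]
      rfl
    simp only [Set.mem_ofPred_eq, Set.mem_preimage, Set.mem_singleton_iff, Prod.mk.injEq, this]
    tauto
  have rect := core_rect μ P F K (fun p => ∏ j, w (p j)) (fun f => ∏ j, w (f j)) (pmass μ K)
    (fun p f k' => by
      rw [key]
      exact (hKmeas.prodMk hSmeas) (measurableSet_singleton _))
    (fun p f k' => by
      rw [key]
      refine (hKind _ _).trans ?_
      rw [hiid, mul_comm]
      congr 1
      rw [← Fintype.prod_subtype_mul_prod_subtype (fun j : Fin n => j.1 < i.1)]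
      congr 1
      · refine Finset.prod_congr rfl fun j _ => ?_
        simp only [Equiv.piEquivPiSubtypeProd, hw, Equiv.coe_fn_symm_mk, dif_pos j.2]
      · refine Finset.prod_congr rfl fun j _ => ?_
        simp only [Equiv.piEquivPiSubtypeProd, hw, Equiv.coe_fn_symm_mk, dif_neg j.2])
  let UB : ({j : Fin n // j.1 < i.1} → 𝒳t × 𝒳 × 𝒴 × 𝒵) → Prop := fun p => (fun j => (p j).1) = t
  let UA : ({j : Fin n // j.1 < i.1} → 𝒳t × 𝒳 × 𝒴 × 𝒵) → Prop := fun p =>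
    (fun j => (p j).2.2.1) = ay ∧ (fun j => (p j).2.1) = ax ∧ (fun j => (p j).2.2.2) = az
  let VB : ({j : Fin n // ¬ j.1 < i.1} → 𝒳t × 𝒳 × 𝒴 × 𝒵) → Prop := fun f =>
    (fun j : {j : Fin n // i ≤ j} => (f ⟨j.1, not_lt.mpr j.2⟩).2.2.1) = y
  let VC : ({j : Fin n // ¬ j.1 < i.1} → 𝒳t × 𝒳 × 𝒴 × 𝒵) → Prop := fun f =>
    (f ⟨i, lt_irrefl _⟩).1 = cx ∧
      enc (fun j => if h : j.1 < i.1 then t ⟨j, h⟩ else (f ⟨j, h⟩).1) k = cw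
  have henc : ∀ ω, UB (P ω) →
      (fun j => if h : j.1 < i.1 then t ⟨j, h⟩ else (F ω ⟨j, h⟩).1) = fun j => (S ω j).1 := by
    intro ω h
    funext j
    by_cases hj : j.1 < i.1
    · rw [dif_pos hj, ← h]
    · rw [dif_neg hj]
  have hC : ∀ ω, UB (P ω) → K ω = k → (VC (F ω) ↔
      ((S ω i).1 = cx ∧ enc (fun j => (S ω j).1) (K ω) = cw)) := by
    intro ω h hk
    simp only [VC]
    rw [henc ω h, hk]
  have mk : ∀ {γ : Type} (G : Ω → γ) (g : γ) (U : ({j : Fin n // j.1 < i.1} → 𝒳t × 𝒳 × 𝒴 × 𝒵) → Prop)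
      (V : ({j : Fin n // ¬ j.1 < i.1} → 𝒳t × 𝒳 × 𝒴 × 𝒵) → Prop),
      (∀ ω, G ω = g ↔ U (P ω) ∧ V (F ω) ∧ K ω = k) →
      pmass μ G g = (∑ p with U p, ∏ j, w (p j)) * (∑ f with V f, ∏ j, w (f j)) * pmass μ K k := by
    intro γ G g U V h
    rw [← rect U V k]
    show μ.real _ = _
    congr 1
    ext ω
    exact h ω
  refine (congrArg₂ (· * ·) (mk _ _ (fun p => UA p ∧ UB p) (fun f => VB f ∧ VC f) ?_)
    (mk _ _ UB VB ?_)).trans (Eq.trans ?_ (congrArg₂ (· * ·) (mk _ _ (fun p => UA p ∧ UB p) VB ?_)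
    (mk _ _ UB (fun f => VB f ∧ VC f) ?_)).symm)
  · intro ω
    have := hC ω
    simp only [Prod.mk.injEq]
    change UA (P ω) ∧ (UB (P ω) ∧ VB (F ω) ∧ K ω = k) ∧ _ ↔ _
    tauto
  · intro ω
    simp only [Prod.mk.injEq]
    rfl
  · ring
  · intro ω
    simp only [Prod.mk.injEq]
    change UA (P ω) ∧ (UB (P ω) ∧ VB (F ω) ∧ K ω = k) ↔ _
    tauto
  · intro ω
    have := hC ω
    simp only [Prod.mk.injEq]
    change (UB (P ω) ∧ VB (F ω) ∧ K ω = k) ∧ _ ↔ _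
    tauto
end
end

section
/- Under the converse setup, for every i ∈ {1,…,n} the block Z^{i−1} is conditionally independent of (X_i, W) given (X^{i−1}, Y_{i+1}^n, K), and Z^{i−1} is conditionally independent of (Y_i, W) given (X^{i−1}, Y_{i+1}^n, K); i.e., both Z^{i−1} − (X^{i−1}, Y_{i+1}^n, K) − (X_i, W) and Z^{i−1} − (X^{i−1}, Y_{i+1}^n, K) − (Y_i, W) form Markov chains. -/
open MeasureTheory

noncomputable section

lemma pmass_comp_aux {Ω : Type*} [MeasurableSpace Ω] (μ : Measure Ω) [IsProbabilityMeasure μ]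
    {τ α : Type*} [Fintype τ] [DecidableEq α] (T : Ω → τ)
    (hT : ∀ t, MeasurableSet (T ⁻¹' {t})) (f : τ → α) (x : α) :
    pmass μ (fun ω => f (T ω)) x = ∑ t with f t = x, pmass μ T t := by
  unfold pmass
  rw [← ENNReal.toReal_sum (fun _ _ => measure_ne_top _ _),
    sum_measure_preimage_singleton _ (fun y _ => hT y)]
  congr 2
  ext ω
  simp

lemma condIndep_of_swap {Ω : Type*} [MeasurableSpace Ω] (μ : Measure Ω) [IsProbabilityMeasure μ]
    {τ α β γ : Type*} [Fintype τ] (T : Ω → τ)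
    (hT : ∀ t, MeasurableSet (T ⁻¹' {t})) (A : τ → α) (B : τ → β) (C : τ → γ)
    (m : τ → τ → τ)
    (hm : ∀ t t', m (m t t') (m t' t) = t)
    (hA : ∀ t t', A (m t t') = A t') (hB : ∀ t t', B (m t t') = B t)
    (hC : ∀ t t', C (m t t') = C t)
    (hw : ∀ t t', B t = B t' →
      pmass μ T t * pmass μ T t' = pmass μ T (m t t') * pmass μ T (m t' t)) :
    CondIndepRV μ (fun ω => A (T ω)) (fun ω => B (T ω)) (fun ω => C (T ω)) := by
  classical
  intro a b c
  rw [pmass_comp_aux μ T hT (fun t => (A t, B t, C t)), pmass_comp_aux μ T hT B,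
    pmass_comp_aux μ T hT (fun t => (A t, B t)), pmass_comp_aux μ T hT (fun t => (B t, C t)),
    Finset.sum_mul_sum, Finset.sum_mul_sum, ← Finset.sum_product', ← Finset.sum_product']
  refine Finset.sum_bij' (fun p _ => (m p.2 p.1, m p.1 p.2)) (fun p _ => (m p.2 p.1, m p.1 p.2))
    ?_ ?_ ?_ ?_ ?_
  · rintro ⟨t, t'⟩ h
    simp only [Finset.mem_product, Finset.mem_filter, Finset.mem_univ, true_and,
      Prod.mk.injEq] at h ⊢
    simp [hA, hB, hC, h]
  · rintro ⟨t, t'⟩ h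
    simp only [Finset.mem_product, Finset.mem_filter, Finset.mem_univ, true_and,
      Prod.mk.injEq] at h ⊢
    simp [hA, hB, hC, h]
  · rintro ⟨t, t'⟩ h
    simp [hm]
  · rintro ⟨t, t'⟩ h
    simp [hm]
  · rintro ⟨t, t'⟩ h
    simp only [Finset.mem_product, Finset.mem_filter, Finset.mem_univ, true_and,
      Prod.mk.injEq] at h ⊢
    rw [hw t t' (by rw [h.2, h.1.2.1]), mul_comm]

/-- Under the converse setup, for every `i`, `Z^{i−1}` is conditionally independent of
`(Xᵢ, W)` given `(X^{i−1}, Y_{i+1}ⁿ, K)`, and `Z^{i−1}` is conditionally independent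
of `(Yᵢ, W)` given `(X^{i−1}, Y_{i+1}ⁿ, K)`. -/
theorem eavesdropper_past_condIndep
    {𝒳 𝒳t 𝒴 𝒵 𝒲 𝒦 : Type}
    [Fintype 𝒳] [Fintype 𝒳t] [Fintype 𝒴] [Fintype 𝒵] [Fintype 𝒲] [Fintype 𝒦]
    [MeasurableSpace 𝒳] [DiscreteMeasurableSpace 𝒳]
    [MeasurableSpace 𝒳t] [DiscreteMeasurableSpace 𝒳t]
    [MeasurableSpace 𝒴] [DiscreteMeasurableSpace 𝒴]
    [MeasurableSpace 𝒵] [DiscreteMeasurableSpace 𝒵]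
    [MeasurableSpace 𝒲] [DiscreteMeasurableSpace 𝒲]
    [MeasurableSpace 𝒦] [DiscreteMeasurableSpace 𝒦]
    {Ω : Type} [MeasurableSpace Ω] (μ : MeasureTheory.Measure Ω)
    [MeasureTheory.IsProbabilityMeasure μ]
    {n : ℕ} (S : Ω → Fin n → 𝒳t × 𝒳 × 𝒴 × 𝒵) (K : Ω → 𝒦)
    (hSmeas : Measurable S) (hKmeas : Measurable K)
    (pX : 𝒳 → ℝ) (pXt : 𝒳 → 𝒳t → ℝ) (pYZ : 𝒳 → 𝒴 × 𝒵 → ℝ)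
    (hpX0 : ∀ x, 0 ≤ pX x) (hpX1 : ∑ x, pX x = 1)
    (hpXt0 : ∀ x a, 0 ≤ pXt x a) (hpXt1 : ∀ x, ∑ a, pXt x a = 1)
    (hpYZ0 : ∀ x yz, 0 ≤ pYZ x yz) (hpYZ1 : ∀ x, ∑ yz, pYZ x yz = 1)
    (hiid : HasIIDLaw μ S (fun s => pX s.2.1 * pXt s.2.1 s.1 * pYZ s.2.1 s.2.2))
    (hKunif : UniformRV μ K) (hKind : IndepRV μ K S)
    (enc : (Fin n → 𝒳t) → 𝒦 → 𝒲)
    :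
    ∀ i : Fin n,
      CondIndepRV μ
        (fun ω => (fun j : {j : Fin n // j.1 < i} => (S ω j.1).2.2.2))
        (fun ω => ((fun j : {j : Fin n // j.1 < i} => (S ω j.1).2.1), (fun j : {j : Fin n // i < j} => (S ω j.1).2.2.1), K ω))
        (fun ω => ((S ω i).2.1, enc (fun j => (S ω j).1) (K ω))) ∧
      CondIndepRV μ
        (fun ω => (fun j : {j : Fin n // j.1 < i} => (S ω j.1).2.2.2))
        (fun ω => ((fun j : {j : Fin n // j.1 < i} => (S ω j.1).2.1), (fun j : {j : Fin n // i < j} => (S ω j.1).2.2.1), K ω))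
        (fun ω => ((S ω i).2.2.1, enc (fun j => (S ω j).1) (K ω))) := by
  classical
  intro i
  have hT : ∀ t, MeasurableSet ((fun ω => (K ω, S ω)) ⁻¹' {t}) := fun t =>
    (hKmeas.prodMk hSmeas) (measurableSet_singleton t)
  let m : 𝒦 × (Fin n → 𝒳t × 𝒳 × 𝒴 × 𝒵) → 𝒦 × (Fin n → 𝒳t × 𝒳 × 𝒴 × 𝒵) →
      𝒦 × (Fin n → 𝒳t × 𝒳 × 𝒴 × 𝒵) := fun t t' =>
    (t.1, fun j => if j.1 < i.1 then ((t.2 j).1, (t.2 j).2.1, (t'.2 j).2.2) else t.2 j)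
  have hm : ∀ t t', m (m t t') (m t' t) = t := by
    rintro ⟨k, s⟩ ⟨k', s'⟩
    refine Prod.ext rfl (funext fun j => ?_)
    by_cases h : j.1 < i.1 <;> simp [m, h]
  have hA : ∀ t t', (fun j : {j : Fin n // j.1 < i} => ((m t t').2 j.1).2.2.2)
      = (fun j : {j : Fin n // j.1 < i} => (t'.2 j.1).2.2.2) := by
    intro t t'
    funext ⟨j, hj⟩
    simp [m, hj]
  have hX : ∀ t t' j, ((m t t').2 j).2.1 = (t.2 j).2.1 := by
    intro t t' j
    by_cases h : j.1 < i.1 <;> simp [m, h]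
  have hXt : ∀ t t' j, ((m t t').2 j).1 = (t.2 j).1 := by
    intro t t' j
    by_cases h : j.1 < i.1 <;> simp [m, h]
  have hY : ∀ t t' j, i ≤ j → ((m t t').2 j).2.2.1 = (t.2 j).2.2.1 := by
    intro t t' j hj
    have : ¬ j.1 < i.1 := not_lt.mpr hj
    simp [m, this]
  have hB : ∀ t t', ((fun j : {j : Fin n // j.1 < i} => ((m t t').2 j.1).2.1),
        (fun j : {j : Fin n // i < j} => ((m t t').2 j.1).2.2.1), (m t t').1)
      = ((fun j : {j : Fin n // j.1 < i} => (t.2 j.1).2.1),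
        (fun j : {j : Fin n // i < j} => (t.2 j.1).2.2.1), t.1) := by
    intro t t'
    refine Prod.ext (funext fun j => hX t t' j.1)
      (Prod.ext (funext fun j => hY t t' j.1 j.2.le) rfl)
  have hw : ∀ t t' : 𝒦 × (Fin n → 𝒳t × 𝒳 × 𝒴 × 𝒵),
      ((fun j : {j : Fin n // j.1 < i} => (t.2 j.1).2.1),
        (fun j : {j : Fin n // i < j} => (t.2 j.1).2.2.1), t.1) =
      ((fun j : {j : Fin n // j.1 < i} => (t'.2 j.1).2.1),
        (fun j : {j : Fin n // i < j} => (t'.2 j.1).2.2.1), t'.1) →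
      pmass μ (fun ω => (K ω, S ω)) t * pmass μ (fun ω => (K ω, S ω)) t' =
      pmass μ (fun ω => (K ω, S ω)) (m t t') * pmass μ (fun ω => (K ω, S ω)) (m t' t) := by
    intro t t' h
    have hx : ∀ j : Fin n, j.1 < i.1 → (t.2 j).2.1 = (t'.2 j).2.1 := fun j hj =>
      congrFun (congrArg Prod.fst h) ⟨j, hj⟩
    have hp : ∀ t, pmass μ (fun ω => (K ω, S ω)) t = pmass μ K t.1 *
        ∏ j, (pX (t.2 j).2.1 * pXt (t.2 j).2.1 (t.2 j).1 * pYZ (t.2 j).2.1 (t.2 j).2.2) := by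
      rintro ⟨k, s⟩
      rw [hKind k s, hiid s]
    have hmm := fun a b c d : ℝ => mul_mul_mul_comm a b c d
    rw [hp, hp, hp, hp]
    refine (hmm _ _ _ _).trans (Eq.trans ?_ (hmm _ _ _ _).symm)
    rw [← Finset.prod_mul_distrib, ← Finset.prod_mul_distrib]
    congr 1
    refine Finset.prod_congr rfl fun j _ => ?_
    by_cases hj : j.1 < i.1
    · simp only [m, hj, if_true, hx j hj]
      ring
    · simp only [m, hj, if_false]
  constructor
  · refine condIndep_of_swap μ (fun ω => (K ω, S ω)) hT
      (fun t => (fun j : {j : Fin n // j.1 < i} => (t.2 j.1).2.2.2))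
      (fun t => ((fun j : {j : Fin n // j.1 < i} => (t.2 j.1).2.1),
        (fun j : {j : Fin n // i < j} => (t.2 j.1).2.2.1), t.1))
      (fun t => ((t.2 i).2.1, enc (fun j => (t.2 j).1) t.1)) m hm hA hB ?_ hw
    intro t t'
    simp only [hX, hXt]
    rfl
  · refine condIndep_of_swap μ (fun ω => (K ω, S ω)) hT
      (fun t => (fun j : {j : Fin n // j.1 < i} => (t.2 j.1).2.2.2))
      (fun t => ((fun j : {j : Fin n // j.1 < i} => (t.2 j.1).2.1),
        (fun j : {j : Fin n // i < j} => (t.2 j.1).2.2.1), t.1))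
      (fun t => ((t.2 i).2.2.1, enc (fun j => (t.2 j).1) t.1)) m hm hA hB ?_ hw
    intro t t'
    simp only [hY t t' i le_rfl, hXt]
    rfl
end
end

section
/- Under the converse setup, for every i ∈ {1,…,n}: (a) Y^{i−1} is conditionally independent of X̃_i given (X̃^{i−1}, W, K, Y_i^n), and (b) (X^{i−1}, Z^{i−1}) is conditionally independent of X̃_i given (X̃^{i−1}, W, K, Y_i^n); consequently H(X̃_i | Y_i, Y_{i+1}^n, W, K, X̃^{i−1}) ≥ H(X̃_i | Y_i, Y_{i+1}^n, W, K, X^{i−1}, Z^{i−1}) can be replaced by equality-type data-processing steps in the secrecy converse, i.e., H(X̃_i | Y_i^n, W, K, X̃^{i−1}) = H(X̃_i | Y_i^n, W, K, X̃^{i−1}, Y^{i−1}) ≥ H(X̃_i | Y_i^n, W, K, X̃^{i−1}, X^{i−1}, Z^{i−1}). -/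
open MeasureTheory

noncomputable section

open ProbabilityTheory in
lemma aux_condIndep {Ω π φ α υ γ δ : Type} [MeasurableSpace Ω] (μ : Measure Ω)
    [MeasurableSpace π] [MeasurableSpace φ] [DiscreteMeasurableSpace π]
    [DiscreteMeasurableSpace φ]
    (P : Ω → π) (F : Ω → φ) (h : IndepFun P F μ)
    (a : π → α) (u : π → υ) (g : υ → φ → δ) (c : φ → γ) :
    CondIndepRV μ (fun ω => a (P ω)) (fun ω => (u (P ω), g (u (P ω)) (F ω)))
      (fun ω => c (F ω)) := by
  rintro a₀ ⟨u₀, g₀⟩ c₀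
  have key : ∀ (s : Set π) (t : Set φ), (μ (P ⁻¹' s ∩ F ⁻¹' t)).toReal
      = (μ (P ⁻¹' s)).toReal * (μ (F ⁻¹' t)).toReal := by
    intro s t
    rw [h.measure_inter_preimage_eq_mul s t (MeasurableSet.of_discrete)
      (MeasurableSet.of_discrete), ENNReal.toReal_mul]
  unfold pmass
  have e1 : (fun ω => (a (P ω), (u (P ω), g (u (P ω)) (F ω)), c (F ω))) ⁻¹'
      {(a₀, (u₀, g₀), c₀)} = P ⁻¹' {p | a p = a₀ ∧ u p = u₀} ∩
        F ⁻¹' {f | g u₀ f = g₀ ∧ c f = c₀} := by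
    ext ω; simp; grind
  have e2 : (fun ω => (u (P ω), g (u (P ω)) (F ω))) ⁻¹'
      {(u₀, g₀)} = P ⁻¹' {p | u p = u₀} ∩ F ⁻¹' {f | g u₀ f = g₀} := by
    ext ω; simp; grind
  have e3 : (fun ω => (a (P ω), (u (P ω), g (u (P ω)) (F ω)))) ⁻¹'
      {(a₀, (u₀, g₀))} = P ⁻¹' {p | a p = a₀ ∧ u p = u₀} ∩
        F ⁻¹' {f | g u₀ f = g₀} := by
    ext ω; simp; grind
  have e4 : (fun ω => ((u (P ω), g (u (P ω)) (F ω)), c (F ω))) ⁻¹'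
      {((u₀, g₀), c₀)} = P ⁻¹' {p | u p = u₀} ∩
        F ⁻¹' {f | g u₀ f = g₀ ∧ c f = c₀} := by
    ext ω; simp; grind
  rw [e1, e2, e3, e4, key, key, key, key]
  ring

lemma aux_pmass_fiber {Ω τ β : Type} [MeasurableSpace Ω] (μ : Measure Ω)
    [IsProbabilityMeasure μ] [Fintype τ] [MeasurableSpace τ] [DiscreteMeasurableSpace τ]
    [DecidableEq β]
    (T : Ω → τ) (hT : Measurable T) (f : τ → β) (y : β) :
    pmass μ (fun ω => f (T ω)) y = ∑ t with f t = y, pmass μ T t := by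
  unfold pmass
  rw [← ENNReal.toReal_sum (fun _ _ => measure_ne_top _ _),
    sum_measure_preimage_singleton _ (fun t _ => hT (MeasurableSet.of_discrete))]
  congr 2
  ext ω; simp

lemma aux_entropy {Ω τ β : Type} [MeasurableSpace Ω] (μ : Measure Ω)
    [IsProbabilityMeasure μ] [Fintype τ] [MeasurableSpace τ] [DiscreteMeasurableSpace τ]
    [Fintype β]
    (T : Ω → τ) (hT : Measurable T) (f : τ → β) :
    entropyRV μ (fun ω => f (T ω))
      = ∑ t, - (pmass μ T t * Real.log (pmass μ (fun ω => f (T ω)) (f t))) := by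
  classical
  unfold entropyRV
  rw [← Finset.sum_fiberwise (s := Finset.univ) (g := f)]
  refine Finset.sum_congr rfl fun y _ => ?_
  rw [Finset.sum_congr rfl (g := fun t => - (pmass μ T t *
    Real.log (pmass μ (fun ω => f (T ω)) y)))]
  · rw [Finset.sum_neg_distrib, ← Finset.sum_mul, ← aux_pmass_fiber μ T hT f y, Real.negMulLog]
    ring
  · intro t ht
    rw [(Finset.mem_filter.1 ht).2]

lemma aux_cond_ent {Ω τ α β γ β' δ : Type} [MeasurableSpace Ω] (μ : Measure Ω)
    [IsProbabilityMeasure μ] [Fintype τ] [MeasurableSpace τ] [DiscreteMeasurableSpace τ]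
    [Fintype γ] [Fintype β'] [Fintype δ]
    (T : Ω → τ) (hT : Measurable T) (a : τ → α) (b : τ → β) (c : τ → γ)
    (b' : τ → β') (d : τ → δ)
    (h : CondIndepRV μ (fun ω => a (T ω)) (fun ω => b (T ω)) (fun ω => c (T ω)))
    (hb : ∀ s t, b' s = b' t ↔ b s = b t)
    (hd : ∀ s t, d s = d t ↔ b s = b t ∧ a s = a t) :
    condEntropyRV μ (fun ω => c (T ω)) (fun ω => b' (T ω))
      = condEntropyRV μ (fun ω => c (T ω)) (fun ω => d (T ω)) := by
  unfold condEntropyRV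
  rw [aux_entropy μ T hT (fun t => (c t, b' t)), aux_entropy μ T hT b',
    aux_entropy μ T hT (fun t => (c t, d t)), aux_entropy μ T hT d,
    ← Finset.sum_sub_distrib, ← Finset.sum_sub_distrib]
  refine Finset.sum_congr rfl fun t _ => ?_
  have h1 := h (a t) (b t) (c t)
  have e1 : pmass μ (fun ω => (c (T ω), b' (T ω))) (c t, b' t)
      = pmass μ (fun ω => (b (T ω), c (T ω))) (b t, c t) := by
    unfold pmass; congr 2; ext ω; simp [hb]; tauto
  have e2 : pmass μ (fun ω => b' (T ω)) (b' t) = pmass μ (fun ω => b (T ω)) (b t) := by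
    unfold pmass; congr 2; ext ω; simp [hb]
  have e3 : pmass μ (fun ω => (c (T ω), d (T ω))) (c t, d t)
      = pmass μ (fun ω => (a (T ω), b (T ω), c (T ω))) (a t, b t, c t) := by
    unfold pmass; congr 2; ext ω; simp [hd]; tauto
  have e4 : pmass μ (fun ω => d (T ω)) (d t)
      = pmass μ (fun ω => (a (T ω), b (T ω))) (a t, b t) := by
    unfold pmass; congr 2; ext ω; simp [hd]; tauto
  rw [e1, e2, e3, e4]
  by_cases h0 : pmass μ T t = 0
  · simp [h0]
  have pos : ∀ {ι : Type} (f : τ → ι), pmass μ (fun ω => f (T ω)) (f t) ≠ 0 := by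
    intro ι f
    have hp : 0 < pmass μ T t := lt_of_le_of_ne ENNReal.toReal_nonneg (Ne.symm h0)
    refine (hp.trans_le ?_).ne'
    refine ENNReal.toReal_mono (measure_ne_top _ _) (measure_mono ?_)
    intro ω hω
    have : T ω = t := hω
    simp [this]
  have l := congrArg Real.log h1
  rw [Real.log_mul (pos fun t => (a t, b t, c t)) (pos b),
    Real.log_mul (pos fun t => (a t, b t)) (pos fun t => (b t, c t))] at l
  linear_combination (pmass μ T t) * l

open ProbabilityTheory in
lemma aux_indep3 {Ω π φ κ : Type} [MeasurableSpace Ω] (μ : Measure Ω)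
    [IsProbabilityMeasure μ]
    [Finite π] [Finite φ] [Finite κ]
    [MeasurableSpace π] [MeasurableSpace φ] [MeasurableSpace κ] [DiscreteMeasurableSpace π]
    [DiscreteMeasurableSpace φ] [DiscreteMeasurableSpace κ]
    (P : Ω → π) (F : Ω → φ) (K : Ω → κ) (hP : Measurable P) (hF : Measurable F)
    (hK : Measurable K)
    (h : IndepFun P F μ) (hk : IndepFun K (fun ω => (P ω, F ω)) μ) :
    IndepFun P (fun ω => (F ω, K ω)) μ := by
  rw [indepFun_iff_map_prod_eq_prod_map_map hP.aemeasurable (hF.prodMk hK).aemeasurable]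
  refine Measure.ext_of_singleton ?_
  rintro ⟨p, f, k⟩
  rw [← Set.singleton_prod_singleton, Measure.prod_prod, Set.singleton_prod_singleton,
    Measure.map_apply (hP.prodMk (hF.prodMk hK)) .of_discrete,
    Measure.map_apply hP .of_discrete, Measure.map_apply (hF.prodMk hK) .of_discrete]
  have a1 := hk.measure_inter_preimage_eq_mul {k} {(p, f)} .of_discrete .of_discrete
  have a2 := hk.measure_inter_preimage_eq_mul {k} {q | q.2 = f} .of_discrete .of_discrete
  have a3 := h.measure_inter_preimage_eq_mul {p} {f} .of_discrete .of_discrete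
  have e1 : (fun ω => (P ω, F ω, K ω)) ⁻¹' {(p, f, k)}
     = K ⁻¹' {k} ∩ (fun ω => (P ω, F ω)) ⁻¹' {(p, f)} := by ext; simp; tauto
  have e2 : (fun ω => (F ω, K ω)) ⁻¹' {(f, k)}
     = K ⁻¹' {k} ∩ (fun ω => (P ω, F ω)) ⁻¹' {q | q.2 = f} := by ext; simp; tauto
  have e3 : (fun ω => (P ω, F ω)) ⁻¹' {(p, f)} = P ⁻¹' {p} ∩ F ⁻¹' {f} := by ext; simp
  have e4 : (fun ω => (P ω, F ω)) ⁻¹' {q | q.2 = f} = F ⁻¹' {f} := by ext; simp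
  rw [e1, e2, a1, a2, e3, e4, a3]
  ring

open ProbabilityTheory in
lemma aux_iid {Ω σ : Type} [MeasurableSpace Ω] (μ : Measure Ω)
    [IsProbabilityMeasure μ] [Fintype σ] [MeasurableSpace σ] [DiscreteMeasurableSpace σ]
    {n : ℕ} (S : Ω → Fin n → σ) (hS : Measurable S) (q : σ → ℝ) (hq0 : ∀ s, 0 ≤ q s)
    (hq1 : ∑ s, q s = 1) (h : HasIIDLaw μ S q) :
    iIndepFun (fun i ω => S ω i) μ := by
  classical
  let pm : PMF σ := PMF.ofFintype (fun s => ENNReal.ofReal (q s)) (by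
    rw [← ENNReal.ofReal_sum_of_nonneg (fun s _ => hq0 s), hq1, ENNReal.ofReal_one])
  have hmap : μ.map S = Measure.pi (fun _ => pm.toMeasure) := by
    refine Measure.ext_of_singleton fun v => ?_
    rw [Measure.map_apply hS .of_discrete, Measure.pi_singleton]
    have := h v
    unfold pmass at this
    rw [← ENNReal.ofReal_toReal (measure_ne_top μ (S ⁻¹' {v})), this,
      ENNReal.ofReal_prod_of_nonneg (fun i _ => hq0 _)]
    refine Finset.prod_congr rfl fun i _ => ?_
    rw [PMF.toMeasure_apply_singleton _ _ .of_discrete]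
    rfl
  have hm : ∀ i, Measurable (fun ω => S ω i) := fun i => (measurable_pi_apply i).comp hS
  have hc : ∀ i, μ.map (fun ω => S ω i) = pm.toMeasure := by
    intro i
    have := Measure.map_map (μ := μ) (measurable_pi_apply i) hS
    rw [hmap, (measurePreserving_eval (fun _ : Fin n => pm.toMeasure) i).map_eq] at this
    exact this.symm
  rw [iIndepFun_iff_map_fun_eq_pi_map (fun i => (hm i).aemeasurable)]
  simp_rw [hc]
  exact hmap

open ProbabilityTheory in
lemma aux_indepRV {Ω α β : Type} [MeasurableSpace Ω] (μ : Measure Ω)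
    [IsProbabilityMeasure μ] [Finite α] [Finite β] [MeasurableSpace α] [MeasurableSpace β]
    [DiscreteMeasurableSpace α] [DiscreteMeasurableSpace β]
    (X : Ω → α) (Y : Ω → β) (hX : Measurable X) (hY : Measurable Y) (h : IndepRV μ X Y) :
    IndepFun X Y μ := by
  rw [indepFun_iff_map_prod_eq_prod_map_map hX.aemeasurable hY.aemeasurable]
  refine Measure.ext_of_singleton ?_
  rintro ⟨x, y⟩
  rw [← Set.singleton_prod_singleton, Measure.prod_prod, Set.singleton_prod_singleton,
    Measure.map_apply (hX.prodMk hY) .of_discrete,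
    Measure.map_apply hX .of_discrete, Measure.map_apply hY .of_discrete]
  have := h x y
  unfold pmass at this
  rw [← ENNReal.toReal_mul] at this
  exact (ENNReal.toReal_eq_toReal_iff' (measure_ne_top _ _)
    (ENNReal.mul_ne_top (measure_ne_top _ _) (measure_ne_top _ _))).1 this

/-- Under the converse setup, for every `i`: (a) `Y^{i−1}` is conditionally independent
of `X̃ᵢ` given `(X̃^{i−1}, W, K, Yᵢⁿ)`; (b) `(X^{i−1}, Z^{i−1})` is conditionally
independent of `X̃ᵢ` given `(X̃^{i−1}, W, K, Yᵢⁿ)`; consequently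
`H(X̃ᵢ | Yᵢⁿ, W, K, X̃^{i−1}) = H(X̃ᵢ | Yᵢⁿ, W, K, X̃^{i−1}, Y^{i−1})
  ≥ H(X̃ᵢ | Yᵢⁿ, W, K, X̃^{i−1}, X^{i−1}, Z^{i−1})`. -/
theorem secrecy_converse_data_processing
    {𝒳 𝒳t 𝒴 𝒵 𝒲 𝒦 : Type}
    [Fintype 𝒳] [Fintype 𝒳t] [Fintype 𝒴] [Fintype 𝒵] [Fintype 𝒲] [Fintype 𝒦]
    [MeasurableSpace 𝒳] [DiscreteMeasurableSpace 𝒳]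
    [MeasurableSpace 𝒳t] [DiscreteMeasurableSpace 𝒳t]
    [MeasurableSpace 𝒴] [DiscreteMeasurableSpace 𝒴]
    [MeasurableSpace 𝒵] [DiscreteMeasurableSpace 𝒵]
    [MeasurableSpace 𝒲] [DiscreteMeasurableSpace 𝒲]
    [MeasurableSpace 𝒦] [DiscreteMeasurableSpace 𝒦]
    {Ω : Type} [MeasurableSpace Ω] (μ : MeasureTheory.Measure Ω)
    [MeasureTheory.IsProbabilityMeasure μ]
    {n : ℕ} (S : Ω → Fin n → 𝒳t × 𝒳 × 𝒴 × 𝒵) (K : Ω → 𝒦)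
    (hSmeas : Measurable S) (hKmeas : Measurable K)
    (pX : 𝒳 → ℝ) (pXt : 𝒳 → 𝒳t → ℝ) (pYZ : 𝒳 → 𝒴 × 𝒵 → ℝ)
    (hpX0 : ∀ x, 0 ≤ pX x) (hpX1 : ∑ x, pX x = 1)
    (hpXt0 : ∀ x a, 0 ≤ pXt x a) (hpXt1 : ∀ x, ∑ a, pXt x a = 1)
    (hpYZ0 : ∀ x yz, 0 ≤ pYZ x yz) (hpYZ1 : ∀ x, ∑ yz, pYZ x yz = 1)
    (hiid : HasIIDLaw μ S (fun s => pX s.2.1 * pXt s.2.1 s.1 * pYZ s.2.1 s.2.2))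
    (hKunif : UniformRV μ K) (hKind : IndepRV μ K S)
    (enc : (Fin n → 𝒳t) → 𝒦 → 𝒲)
    :
    ∀ i : Fin n,
      CondIndepRV μ
        (fun ω => (fun j : {j : Fin n // j.1 < i} => (S ω j.1).2.2.1))
        (fun ω => ((fun j : {j : Fin n // j.1 < i} => (S ω j.1).1), enc (fun j => (S ω j).1) (K ω), K ω, (fun j : {j : Fin n // i ≤ j} => (S ω j.1).2.2.1)))
        (fun ω => (S ω i).1) ∧
      CondIndepRV μ
        (fun ω => ((fun j : {j : Fin n // j.1 < i} => (S ω j.1).2.1), (fun j : {j : Fin n // j.1 < i} => (S ω j.1).2.2.2)))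
        (fun ω => ((fun j : {j : Fin n // j.1 < i} => (S ω j.1).1), enc (fun j => (S ω j).1) (K ω), K ω, (fun j : {j : Fin n // i ≤ j} => (S ω j.1).2.2.1)))
        (fun ω => (S ω i).1) ∧
      condEntropyRV μ (fun ω => (S ω i).1)
        (fun ω => ((fun j : {j : Fin n // i ≤ j} => (S ω j.1).2.2.1), enc (fun j => (S ω j).1) (K ω), K ω, (fun j : {j : Fin n // j.1 < i} => (S ω j.1).1)))
        = condEntropyRV μ (fun ω => (S ω i).1)
            (fun ω => ((fun j : {j : Fin n // i ≤ j} => (S ω j.1).2.2.1), enc (fun j => (S ω j).1) (K ω), K ω, (fun j : {j : Fin n // j.1 < i} => (S ω j.1).1), (fun j : {j : Fin n // j.1 < i} => (S ω j.1).2.2.1))) ∧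
      condEntropyRV μ (fun ω => (S ω i).1)
        (fun ω => ((fun j : {j : Fin n // i ≤ j} => (S ω j.1).2.2.1), enc (fun j => (S ω j).1) (K ω), K ω, (fun j : {j : Fin n // j.1 < i} => (S ω j.1).1)))
        ≥ condEntropyRV μ (fun ω => (S ω i).1)
            (fun ω => ((fun j : {j : Fin n // i ≤ j} => (S ω j.1).2.2.1), enc (fun j => (S ω j).1) (K ω), K ω, (fun j : {j : Fin n // j.1 < i} => (S ω j.1).1), (fun j : {j : Fin n // j.1 < i} => (S ω j.1).2.1), (fun j : {j : Fin n // j.1 < i} => (S ω j.1).2.2.2))) := by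
  classical
  intro i
  have hq1 : ∑ s : 𝒳t × 𝒳 × 𝒴 × 𝒵, pX s.2.1 * pXt s.2.1 s.1 * pYZ s.2.1 s.2.2 = 1 := by
    rw [Fintype.sum_prod_type_right]
    simp only [← Finset.sum_mul, ← Finset.mul_sum]
    simp only [hpXt1, mul_one]
    rw [Fintype.sum_prod_type]
    simp only [← Finset.mul_sum, hpYZ1, mul_one, hpX1]
  have hI := aux_iid μ S hSmeas _
    (fun s => mul_nonneg (mul_nonneg (hpX0 _) (hpXt0 _ _)) (hpYZ0 _ _)) hq1 hiid
  have hKS := aux_indepRV μ K S hKmeas hSmeas hKind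
  let P : Ω → ({j : Fin n // j.1 < i} → 𝒳t × 𝒳 × 𝒴 × 𝒵) := fun ω j => S ω j.1
  let F : Ω → ({j : Fin n // i ≤ j} → 𝒳t × 𝒳 × 𝒴 × 𝒵) := fun ω j => S ω j.1
  have hm : ∀ i, Measurable (fun ω => S ω i) := fun i => (measurable_pi_apply i).comp hSmeas
  have hP : Measurable P := measurable_pi_lambda _ fun j => hm j.1
  have hF : Measurable F := measurable_pi_lambda _ fun j => hm j.1
  have hPF : ProbabilityTheory.IndepFun P F μ := by
    have h0 := hI.indepFun_finset (Finset.univ.filter (fun j : Fin n => j.1 < i))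
      (Finset.univ.filter (fun j : Fin n => i ≤ j)) (by
        rw [Finset.disjoint_left]; intro j h1 h2
        simp at h1 h2; omega) hm
    have := h0.comp (φ := fun v => fun j : {j : Fin n // j.1 < i} => v ⟨j.1, by simpa using j.2⟩)
      (ψ := fun v => fun j : {j : Fin n // i ≤ j} => v ⟨j.1, by simpa using j.2⟩)
      (measurable_of_finite _) (measurable_of_finite _)
    exact this
  have hKPF : ProbabilityTheory.IndepFun K (fun ω => (P ω, F ω)) μ :=
    hKS.comp (φ := id) (ψ := fun v : Fin n → 𝒳t × 𝒳 × 𝒴 × 𝒵 =>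
      ((fun j : {j : Fin n // j.1 < i} => v j.1), (fun j : {j : Fin n // i ≤ j} => v j.1))) measurable_id (measurable_of_finite _)
  have hind := aux_indep3 μ P F K hP hF hKmeas hPF hKPF
  let glue : ({j : Fin n // j.1 < i} → 𝒳t) → ({j : Fin n // i ≤ j} → 𝒳t × 𝒳 × 𝒴 × 𝒵) →
      Fin n → 𝒳t := fun u f j => if h : j.1 < i then u ⟨j, h⟩ else (f ⟨j, by
        rw [Fin.le_def]; omega⟩).1
  have hglue : ∀ ω, glue (fun j => (P ω j).1) (F ω) = fun j => (S ω j).1 := by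
    intro ω; funext j; simp only [glue, P, F]; split <;> rfl
  let u : ({j : Fin n // j.1 < i} → 𝒳t × 𝒳 × 𝒴 × 𝒵) → ({j : Fin n // j.1 < i} → 𝒳t) :=
    fun p j => (p j).1
  let g : ({j : Fin n // j.1 < i} → 𝒳t) → ({j : Fin n // i ≤ j} → 𝒳t × 𝒳 × 𝒴 × 𝒵) × 𝒦 →
      𝒲 × 𝒦 × ({j : Fin n // i ≤ j} → 𝒴) :=
    fun u f => (enc (glue u f.1) f.2, f.2, fun j => (f.1 j).2.2.1)
  let c : ({j : Fin n // i ≤ j} → 𝒳t × 𝒳 × 𝒴 × 𝒵) × 𝒦 → 𝒳t :=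
    fun f => (f.1 ⟨i, le_refl i⟩).1
  have ha := aux_condIndep μ P (fun ω => (F ω, K ω)) hind (fun p j => (p j).2.2.1) u g c
  have hb := aux_condIndep μ P (fun ω => (F ω, K ω)) hind
    (fun p => ((fun j => (p j).2.1), (fun j => (p j).2.2.2))) u g c
  simp only [u, g, c, hglue] at ha hb
  have ha' := aux_cond_ent μ (fun ω => (S ω, K ω)) (hSmeas.prodMk hKmeas)
    (fun t => (fun j : {j : Fin n // j.1 < i} => (t.1 j.1).2.2.1))
    (fun t => ((fun j : {j : Fin n // j.1 < i} => (t.1 j.1).1), enc (fun j => (t.1 j).1) t.2, t.2, (fun j : {j : Fin n // i ≤ j} => (t.1 j.1).2.2.1)))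
    (fun t => (t.1 i).1)
    (fun t => ((fun j : {j : Fin n // i ≤ j} => (t.1 j.1).2.2.1), enc (fun j => (t.1 j).1) t.2, t.2, (fun j : {j : Fin n // j.1 < i} => (t.1 j.1).1)))
    (fun t => ((fun j : {j : Fin n // i ≤ j} => (t.1 j.1).2.2.1), enc (fun j => (t.1 j).1) t.2, t.2, (fun j : {j : Fin n // j.1 < i} => (t.1 j.1).1), (fun j : {j : Fin n // j.1 < i} => (t.1 j.1).2.2.1)))
    ha (by intro s t; simp only [Prod.mk.injEq]; tauto)
    (by intro s t; simp only [Prod.mk.injEq]; tauto)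
  have hb' := aux_cond_ent μ (fun ω => (S ω, K ω)) (hSmeas.prodMk hKmeas)
    (fun t => ((fun j : {j : Fin n // j.1 < i} => (t.1 j.1).2.1), (fun j : {j : Fin n // j.1 < i} => (t.1 j.1).2.2.2)))
    (fun t => ((fun j : {j : Fin n // j.1 < i} => (t.1 j.1).1), enc (fun j => (t.1 j).1) t.2, t.2, (fun j : {j : Fin n // i ≤ j} => (t.1 j.1).2.2.1)))
    (fun t => (t.1 i).1)
    (fun t => ((fun j : {j : Fin n // i ≤ j} => (t.1 j.1).2.2.1), enc (fun j => (t.1 j).1) t.2, t.2, (fun j : {j : Fin n // j.1 < i} => (t.1 j.1).1)))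
    (fun t => ((fun j : {j : Fin n // i ≤ j} => (t.1 j.1).2.2.1), enc (fun j => (t.1 j).1) t.2, t.2, (fun j : {j : Fin n // j.1 < i} => (t.1 j.1).1), (fun j : {j : Fin n // j.1 < i} => (t.1 j.1).2.1), (fun j : {j : Fin n // j.1 < i} => (t.1 j.1).2.2.2)))
    hb (by intro s t; simp only [Prod.mk.injEq]; tauto)
    (by intro s t; simp only [Prod.mk.injEq]; tauto)
  refine ⟨ha, hb, ?_, ?_⟩
  · convert ha'
  · refine le_of_eq (Eq.symm ?_)
    convert hb'
end
end

section
/- Single-letterization of the distortion constraint: under the converse setup, let Dec : 𝒴^n × 𝒲 × 𝒦 → 𝒳̂^n be any decoder and let d : 𝒳̃ × 𝒳̂ → [0, d_max] be a bounded per-letter distortion function. Then for each i ∈ {1,…,n}: (a) X̃_i is conditionally independent of Y^{i−1} given (W, K, X^{i−1}, Z^{i−1}, Y_i^n); and (b) there exists a function φ_i of (U_i, Y_i) — where U_i = (W, Y_{i+1}^n, Z^{i−1}, X^{i−1}, K) — such that E[ d(X̃_i, φ_i(U_i, Y_i)) ] ≤ E[ d(X̃_i, Dec(Y^n, W, K)_i)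 ]. Hence E[(1/n) Σ_{i=1}^n d(X̃_i, Dec(Y^n, W, K)_i)] ≥ (1/n) Σ_{i=1}^n E[ d(X̃_i, φ_i(U_i, Y_i)) ]. -/
open MeasureTheory

noncomputable section

open Classical in
theorem aux_pmass_comp {Ω : Type*} [MeasurableSpace Ω] (μ : Measure Ω) [IsProbabilityMeasure μ]
    {τ β : Type*} [Fintype τ] (T : Ω → τ) (hT : ∀ t, MeasurableSet (T ⁻¹' {t})) (g : τ → β) (b : β) :
    pmass μ (fun ω => g (T ω)) b = ∑ t, if g t = b then pmass μ T t else 0 := by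
  unfold pmass
  have h1 : ((fun ω => g (T ω)) ⁻¹' {b}) = ⋃ t ∈ Finset.univ.filter (fun t => g t = b), T ⁻¹' {t} := by
    ext ω; simp
  rw [h1, measure_biUnion_finset, ENNReal.toReal_sum, Finset.sum_filter]
  · intro t _; exact measure_ne_top _ _
  · intro t _ t' _ hne
    exact Set.disjoint_left.mpr (fun ω h h' => hne (by
      simp only [Set.mem_preimage, Set.mem_singleton_iff] at h h'
      exact h.symm.trans h'))
  · intro t _; exact hT t

theorem aux_expVal_comp {Ω : Type*} [MeasurableSpace Ω] (μ : Measure Ω) [IsProbabilityMeasure μ]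
    {τ β : Type*} [Fintype τ] [Fintype β] (T : Ω → τ) (hT : ∀ t, MeasurableSet (T ⁻¹' {t}))
    (g : τ → β) (f : β → ℝ) :
    expVal μ (fun ω => g (T ω)) f = ∑ t, pmass μ T t * f (g t) := by
  classical
  unfold expVal
  simp_rw [aux_pmass_comp μ T hT g, Finset.sum_mul]
  rw [Finset.sum_comm]
  refine Finset.sum_congr rfl fun t _ => ?_
  simp [ite_mul]

open Classical in
/-- the conditional independence from factorization -/
theorem aux_condIndep_s17 {Ω : Type*} [MeasurableSpace Ω] (μ : Measure Ω) [IsProbabilityMeasure μ]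
    {τ α β γ : Type*} [Fintype τ] [Fintype α] [Fintype γ]
    (T : Ω → τ) (hT : ∀ t, MeasurableSet (T ⁻¹' {t}))
    (A : τ → α) (B : τ → β) (C : τ → γ) (g : α → β → ℝ) (f : β → γ → ℝ)
    (hfac : ∀ a b c, (∑ t, if (A t, B t, C t) = (a, b, c) then pmass μ T t else 0) = g a b * f b c) :
    CondIndepRV μ (fun ω => A (T ω)) (fun ω => B (T ω)) (fun ω => C (T ω)) := by
  intro a b c
  have e1 := aux_pmass_comp μ T hT (fun t => (A t, B t, C t)) (a, b, c)
  have e2 : pmass μ (fun ω => (A (T ω), B (T ω))) (a, b) = ∑ c, g a b * f b c := by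
    rw [aux_pmass_comp μ T hT (fun t => (A t, B t)) (a, b)]
    simp_rw [← hfac]
    rw [Finset.sum_comm]
    refine Finset.sum_congr rfl fun t _ => ?_
    by_cases h1 : A t = a <;> by_cases h2 : B t = b <;> simp [h1, h2]
  have e3 : pmass μ (fun ω => (B (T ω), C (T ω))) (b, c) = ∑ a, g a b * f b c := by
    rw [aux_pmass_comp μ T hT (fun t => (B t, C t)) (b, c)]
    simp_rw [← hfac]
    rw [Finset.sum_comm]
    refine Finset.sum_congr rfl fun t _ => ?_
    by_cases h1 : C t = c <;> by_cases h2 : B t = b <;> simp [h1, h2]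
  have e4 : pmass μ (fun ω => B (T ω)) b = ∑ a, ∑ c, g a b * f b c := by
    rw [aux_pmass_comp μ T hT B b]
    simp_rw [← hfac]
    rw [Finset.sum_congr rfl fun a _ => Finset.sum_comm, Finset.sum_comm]
    refine Finset.sum_congr rfl fun t _ => ?_
    by_cases h2 : B t = b
    · rw [Finset.sum_eq_single (A t), Finset.sum_eq_single (C t)] <;> simp +contextual [h2, eq_comm]
    · simp [h2]
  have e1 := e1.trans (Eq.trans (by congr!) (hfac a b c))
  rw [e1, e2, e3, e4]
  simp_rw [← Finset.mul_sum, ← Finset.sum_mul]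
  ring

open Classical in
theorem aux_min {τ α β γ δ : Type*} [Fintype τ] [Fintype α] [Fintype β] [Fintype γ]
    [Fintype δ] [Nonempty δ]
    (q : τ → ℝ)
    (A : τ → α) (B : τ → β) (C : τ → γ) (g : α → β → ℝ) (f : β → γ → ℝ)
    (hf : ∀ b c, 0 ≤ f b c)
    (hfac : ∀ a b c, (∑ t, if (A t, B t, C t) = (a, b, c) then q t else 0) = g a b * f b c)
    (d : α → δ → ℝ) :
    ∃ φ : β → δ, ∀ D : β → γ → δ,
      ∑ t, q t * d (A t) (φ (B t)) ≤ ∑ t, q t * d (A t) (D (B t) (C t)) := by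
  have key : ∀ D : β → γ → δ, ∑ t, q t * d (A t) (D (B t) (C t)) =
      ∑ b, ∑ c, f b c * ∑ a, g a b * d a (D b c) := by
    intro D
    have : ∀ t, q t * d (A t) (D (B t) (C t)) =
        ∑ x : β × γ × α, if (A t, B t, C t) = (x.2.2, x.1, x.2.1) then
          q t * d x.2.2 (D x.1 x.2.1) else 0 := by
      intro t
      rw [Finset.sum_eq_single (B t, C t, A t)]
      · simp
      · rintro ⟨b, c, a⟩ _ hne
        rw [if_neg]
        intro h
        simp only [Prod.mk.injEq] at h
        exact hne (by simp [h.1, h.2.1, h.2.2])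
      · simp
    simp_rw [this]
    rw [Finset.sum_comm, Fintype.sum_prod_type]
    refine Finset.sum_congr rfl fun b _ => ?_
    rw [Fintype.sum_prod_type]
    refine Finset.sum_congr rfl fun c _ => ?_
    rw [Finset.mul_sum]
    refine Finset.sum_congr rfl fun a _ => ?_
    have h := hfac a b c
    calc _ = (∑ t, if (A t, B t, C t) = (a, b, c) then q t else 0) * d a (D b c) := by
            rw [Finset.sum_mul]
            refine Finset.sum_congr rfl fun t _ => ?_
            rw [ite_mul, zero_mul]
      _ = _ := by rw [h]; ring
  have hmin : ∀ b, ∃ x : δ, ∀ y : δ, ∑ a, g a b * d a x ≤ ∑ a, g a b * d a y :=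
    fun b => Finite.exists_min (fun x => ∑ a, g a b * d a x)
  choose φ hφ using hmin
  refine ⟨φ, fun D => ?_⟩
  rw [key D, key (fun b _ => φ b)]
  refine Finset.sum_le_sum fun b _ => Finset.sum_le_sum fun c _ => ?_
  exact mul_le_mul_of_nonneg_left (hφ b _) (hf b c)

open Classical in
theorem aux_fac {𝒳 𝒳t 𝒴 𝒵 𝒲 𝒦 : Type}
    [Fintype 𝒳] [Fintype 𝒳t] [Fintype 𝒴] [Fintype 𝒵] [Fintype 𝒦] {n : ℕ}
    (pX : 𝒳 → ℝ) (pXt : 𝒳 → 𝒳t → ℝ) (pYZ : 𝒳 → 𝒴 × 𝒵 → ℝ) (pK : 𝒦 → ℝ)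
    (hpYZ0 : ∀ x yz, 0 ≤ pYZ x yz)
    (enc : (Fin n → 𝒳t) → 𝒦 → 𝒲) (i : Fin n) [Nonempty 𝒴]
    (q : (Fin n → 𝒳t × 𝒳 × 𝒴 × 𝒵) × 𝒦 → ℝ)
    (hq : ∀ t, q t = pK t.2 * ∏ j, (pX (t.1 j).2.1 * pXt (t.1 j).2.1 (t.1 j).1 *
      pYZ (t.1 j).2.1 (t.1 j).2.2)) :
    ∃ (g : 𝒳t → (𝒲 × 𝒦 × ({j : Fin n // j.1 < i} → 𝒳) × ({j : Fin n // j.1 < i} → 𝒵) ×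
          ({j : Fin n // i ≤ j} → 𝒴)) → ℝ)
      (f : (𝒲 × 𝒦 × ({j : Fin n // j.1 < i} → 𝒳) × ({j : Fin n // j.1 < i} → 𝒵) ×
          ({j : Fin n // i ≤ j} → 𝒴)) → ({j : Fin n // j.1 < i} → 𝒴) → ℝ),
      (∀ b c, 0 ≤ f b c) ∧ ∀ a b c,
        (∑ t : (Fin n → 𝒳t × 𝒳 × 𝒴 × 𝒵) × 𝒦, if ((t.1 i).1,
          (enc (fun j => (t.1 j).1) t.2, t.2, (fun j : {j : Fin n // j.1 < i} => (t.1 j.1).2.1),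
            (fun j : {j : Fin n // j.1 < i} => (t.1 j.1).2.2.2),
            (fun j : {j : Fin n // i ≤ j} => (t.1 j.1).2.2.1)),
          (fun j : {j : Fin n // j.1 < i} => (t.1 j.1).2.2.1)) = (a, b, c) then q t else 0)
          = g a b * f b c := by
  let τ := (Fin n → 𝒳t × 𝒳 × 𝒴 × 𝒵) × 𝒦
  let A : τ → 𝒳t := fun t => (t.1 i).1
  let B : τ → (𝒲 × 𝒦 × ({j : Fin n // j.1 < i} → 𝒳) × ({j : Fin n // j.1 < i} → 𝒵) ×
          ({j : Fin n // i ≤ j} → 𝒴)) := fun t =>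
    (enc (fun j => (t.1 j).1) t.2, t.2, (fun j : {j : Fin n // j.1 < i} => (t.1 j.1).2.1),
            (fun j : {j : Fin n // j.1 < i} => (t.1 j.1).2.2.2),
            (fun j : {j : Fin n // i ≤ j} => (t.1 j.1).2.2.1))
  let C : τ → ({j : Fin n // j.1 < i} → 𝒴) := fun t => fun j => (t.1 j.1).2.2.1
  let h : τ → ℝ := fun t => pK t.2 * ∏ j : Fin n, (pX (t.1 j).2.1 * pXt (t.1 j).2.1 (t.1 j).1 *
      if j.1 < i then 1 else pYZ (t.1 j).2.1 (t.1 j).2.2)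
  let f : (𝒲 × 𝒦 × ({j : Fin n // j.1 < i} → 𝒳) × ({j : Fin n // j.1 < i} → 𝒵) ×
          ({j : Fin n // i ≤ j} → 𝒴)) → ({j : Fin n // j.1 < i} → 𝒴) → ℝ := fun b c =>
    ∏ j : Fin n, if hj : j.1 < i then pYZ (b.2.2.1 ⟨j, hj⟩) (c ⟨j, hj⟩, b.2.2.2.1 ⟨j, hj⟩) else 1
  have hqf : ∀ t, q t = h t * f (B t) (C t) := by
    intro t
    simp only [hq, h, f, B, C]
    rw [mul_assoc, ← Finset.prod_mul_distrib]
    congr 1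
    refine Finset.prod_congr rfl fun j _ => ?_
    by_cases hj : j.1 < i <;> simp [hj]
  let ow : ({j : Fin n // j.1 < i} → 𝒴) → τ → τ := fun c t =>
    (fun j => if hj : j.1 < i then ((t.1 j).1, (t.1 j).2.1, c ⟨j, hj⟩, (t.1 j).2.2.2) else t.1 j, t.2)
  have ow1 : ∀ c t j, ((ow c t).1 j).1 = (t.1 j).1 := by
    intro c t j; simp only [ow]; split_ifs <;> rfl
  have ow2 : ∀ c t j, ((ow c t).1 j).2.1 = (t.1 j).2.1 := by
    intro c t j; simp only [ow]; split_ifs <;> rfl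
  have ow3 : ∀ c t j, ((ow c t).1 j).2.2.2 = (t.1 j).2.2.2 := by
    intro c t j; simp only [ow]; split_ifs <;> rfl
  have ow4 : ∀ c t j, ¬ (j.1 < i.1) → (ow c t).1 j = t.1 j := by
    intro c t j hj; simp only [ow]; rw [dif_neg hj]
  have owA : ∀ c t, A (ow c t) = A t := fun c t => ow1 c t i
  have owB : ∀ c t, B (ow c t) = B t := by
    intro c t
    simp only [B, ow1, ow2, ow3]
    have : (fun j : {j : Fin n // i ≤ j} => ((ow c t).1 j.1).2.2.1) =
        (fun j : {j : Fin n // i ≤ j} => (t.1 j.1).2.2.1) := by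
      funext j
      rw [ow4 c t j.1 (not_lt.mpr j.2)]
    rw [this]
  have owC : ∀ c t, C (ow c t) = c := by
    intro c t
    funext j
    simp only [C, ow]
    rw [dif_pos j.2]
  have owow : ∀ c t, ow (C t) (ow c t) = t := by
    intro c t
    refine Prod.ext ?_ rfl
    funext j
    by_cases hj : j.1 < i.1
    · simp [ow, C, hj]
    · rw [ow4 _ _ _ hj, ow4 _ _ _ hj]
  have owh : ∀ c t, h (ow c t) = h t := by
    intro c t
    simp only [h]
    congr 1
    refine Finset.prod_congr rfl fun j _ => ?_
    by_cases hj : j.1 < i.1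
    · rw [if_pos hj, if_pos hj, ow1, ow2]
    · rw [ow4 _ _ _ hj]
  let c0 : {j : Fin n // j.1 < i} → 𝒴 := fun _ => Classical.arbitrary 𝒴
  refine ⟨fun a b => ∑ t : τ, if (A t, B t, C t) = (a, b, c0) then h t else 0, f, ?_, ?_⟩
  · intro b c
    refine Finset.prod_nonneg fun j _ => ?_
    split_ifs
    · exact hpYZ0 _ _
    · exact zero_le_one
  · intro a b c
    change (∑ t : τ, if (A t, B t, C t) = (a, b, c) then q t else 0) = _
    have : ∀ t, (if (A t, B t, C t) = (a, b, c) then q t else 0) =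
        (if (A t, B t, C t) = (a, b, c) then h t else 0) * f b c := by
      intro t
      split_ifs with ht
      · rw [hqf]; simp only [Prod.mk.injEq] at ht; rw [ht.2.1, ht.2.2]
      · simp
    simp_rw [this]
    rw [← Finset.sum_mul]
    congr 1
    rw [← Finset.sum_filter, ← Finset.sum_filter]
    refine Finset.sum_nbij' (ow c0) (ow c) ?_ ?_ ?_ ?_ ?_
    · intro t ht
      simp only [Finset.mem_filter, Finset.mem_univ, true_and, Prod.mk.injEq] at ht ⊢
      exact ⟨(owA _ _).trans ht.1, (owB _ _).trans ht.2.1, owC _ _⟩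
    · intro t ht
      simp only [Finset.mem_filter, Finset.mem_univ, true_and, Prod.mk.injEq] at ht ⊢
      exact ⟨(owA _ _).trans ht.1, (owB _ _).trans ht.2.1, owC _ _⟩
    · intro t ht
      simp only [Finset.mem_filter, Finset.mem_univ, true_and, Prod.mk.injEq] at ht
      rw [← ht.2.2]; exact owow _ _
    · intro t ht
      simp only [Finset.mem_filter, Finset.mem_univ, true_and, Prod.mk.injEq] at ht
      rw [← ht.2.2]; exact owow _ _
    · intro t _
      exact (owh _ _).symm

/-- **Single-letterization of the distortion constraint**: under the converse setup,
for any decoder `Dec` and bounded per-letter distortion `d`: (a) `X̃ᵢ` is conditionally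
independent of `Y^{i−1}` given `(W, K, X^{i−1}, Z^{i−1}, Yᵢⁿ)`; and (b) there are
reconstruction functions `φᵢ` of `(Uᵢ, Yᵢ)` with
`E[d(X̃ᵢ, φᵢ(Uᵢ, Yᵢ))] ≤ E[d(X̃ᵢ, Dec(Yⁿ, W, K)ᵢ)]`, whence
`E[(1/n) ∑ᵢ d(X̃ᵢ, Dec(Yⁿ, W, K)ᵢ)] ≥ (1/n) ∑ᵢ E[d(X̃ᵢ, φᵢ(Uᵢ, Yᵢ))]`. -/
theorem distortion_single_letterization
    {𝒳 𝒳t 𝒴 𝒵 𝒲 𝒦 : Type}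
    [Fintype 𝒳] [Fintype 𝒳t] [Fintype 𝒴] [Fintype 𝒵] [Fintype 𝒲] [Fintype 𝒦]
    [MeasurableSpace 𝒳] [DiscreteMeasurableSpace 𝒳]
    [MeasurableSpace 𝒳t] [DiscreteMeasurableSpace 𝒳t]
    [MeasurableSpace 𝒴] [DiscreteMeasurableSpace 𝒴]
    [MeasurableSpace 𝒵] [DiscreteMeasurableSpace 𝒵]
    [MeasurableSpace 𝒲] [DiscreteMeasurableSpace 𝒲]
    [MeasurableSpace 𝒦] [DiscreteMeasurableSpace 𝒦]
    {Ω : Type} [MeasurableSpace Ω] (μ : MeasureTheory.Measure Ω)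
    [MeasureTheory.IsProbabilityMeasure μ]
    {n : ℕ} (S : Ω → Fin n → 𝒳t × 𝒳 × 𝒴 × 𝒵) (K : Ω → 𝒦)
    (hSmeas : Measurable S) (hKmeas : Measurable K)
    (pX : 𝒳 → ℝ) (pXt : 𝒳 → 𝒳t → ℝ) (pYZ : 𝒳 → 𝒴 × 𝒵 → ℝ)
    (hpX0 : ∀ x, 0 ≤ pX x) (hpX1 : ∑ x, pX x = 1)
    (hpXt0 : ∀ x a, 0 ≤ pXt x a) (hpXt1 : ∀ x, ∑ a, pXt x a = 1)
    (hpYZ0 : ∀ x yz, 0 ≤ pYZ x yz) (hpYZ1 : ∀ x, ∑ yz, pYZ x yz = 1)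
    (hiid : HasIIDLaw μ S (fun s => pX s.2.1 * pXt s.2.1 s.1 * pYZ s.2.1 s.2.2))
    (hKunif : UniformRV μ K) (hKind : IndepRV μ K S)
    (enc : (Fin n → 𝒳t) → 𝒦 → 𝒲)
    {𝒳h : Type} [Fintype 𝒳h]
    (Dec : (Fin n → 𝒴) → 𝒲 → 𝒦 → Fin n → 𝒳h)
    (dmax : ℝ) (d : 𝒳t → 𝒳h → ℝ) (hd0 : ∀ a b, 0 ≤ d a b) (hd1 : ∀ a b, d a b ≤ dmax)
    :
    (∀ i : Fin n,
      CondIndepRV μ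
        (fun ω => (S ω i).1)
        (fun ω => (enc (fun j => (S ω j).1) (K ω), K ω, (fun j : {j : Fin n // j.1 < i} => (S ω j.1).2.1), (fun j : {j : Fin n // j.1 < i} => (S ω j.1).2.2.2), (fun j : {j : Fin n // i ≤ j} => (S ω j.1).2.2.1)))
        (fun ω => (fun j : {j : Fin n // j.1 < i} => (S ω j.1).2.2.1))) ∧
    ∃ φ : (i : Fin n) →
        (𝒲 × ({j : Fin n // i < j} → 𝒴) × ({j : Fin n // j.1 < i} → 𝒵) ×
          ({j : Fin n // j.1 < i} → 𝒳) × 𝒦) × 𝒴 → 𝒳h,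
      (∀ i : Fin n,
        expVal μ
          (fun ω => ((S ω i).1, (fun ω => (enc (fun j => (S ω j).1) (K ω),
          (fun j : {j : Fin n // i < j} => (S ω j.1).2.2.1),
          (fun j : {j : Fin n // j.1 < i} => (S ω j.1).2.2.2),
          (fun j : {j : Fin n // j.1 < i} => (S ω j.1).2.1),
          K ω)) ω, (S ω i).2.2.1))
          (fun t => d t.1 (φ i (t.2.1, t.2.2)))
        ≤ expVal μ
            (fun ω => ((S ω i).1, (fun j => (S ω j).2.2.1), enc (fun j => (S ω j).1) (K ω), K ω))
            (fun t => d t.1 (Dec t.2.1 t.2.2.1 t.2.2.2 i))) ∧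
      expVal μ (fun ω => (S ω, K ω))
        (fun sk => (1 / (n : ℝ)) * ∑ i, d ((sk.1 i).1)
          (Dec (fun j => (sk.1 j).2.2.1) (enc (fun j => (sk.1 j).1) sk.2) sk.2 i))
      ≥ (1 / (n : ℝ)) * ∑ i : Fin n,
          expVal μ
            (fun ω => ((S ω i).1, (fun ω => (enc (fun j => (S ω j).1) (K ω),
          (fun j : {j : Fin n // i < j} => (S ω j.1).2.2.1),
          (fun j : {j : Fin n // j.1 < i} => (S ω j.1).2.2.2),
          (fun j : {j : Fin n // j.1 < i} => (S ω j.1).2.1),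
          K ω)) ω, (S ω i).2.2.1))
            (fun t => d t.1 (φ i (t.2.1, t.2.2))) := by
  classical
  let τ := (Fin n → 𝒳t × 𝒳 × 𝒴 × 𝒵) × 𝒦
  let T : Ω → τ := fun ω => (S ω, K ω)
  have hT : ∀ t, MeasurableSet (T ⁻¹' {t}) := fun t =>
    (hSmeas.prodMk hKmeas) (measurableSet_singleton t)
  have hq : ∀ t : τ, pmass μ T t = pmass μ K t.2 * ∏ j, (pX (t.1 j).2.1 * pXt (t.1 j).2.1 (t.1 j).1 *
      pYZ (t.1 j).2.1 (t.1 j).2.2) := by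
    rintro ⟨s, k⟩
    have h1 := hKind k s
    rw [hiid s] at h1
    rw [← h1]
    unfold pmass
    congr 2
    ext ω
    change (S ω, K ω) = (s, k) ↔ (K ω, S ω) = (k, s)
    rw [Prod.mk.injEq, Prod.mk.injEq, and_comm]
  obtain ⟨ω0⟩ : Nonempty Ω := MeasureTheory.nonempty_of_isProbabilityMeasure μ
  have hfac := fun i : Fin n =>
    haveI : Nonempty 𝒴 := ⟨(S ω0 i).2.2.1⟩
    aux_fac pX pXt pYZ (pmass μ K) hpYZ0 enc i (pmass μ T) hq
  choose g f hf hgf using hfac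
  refine ⟨fun i => ?_, ?_⟩
  · exact aux_condIndep_s17 μ T hT (fun t => (t.1 i).1)
      (fun t => (enc (fun j => (t.1 j).1) t.2, t.2,
        (fun j : {j : Fin n // j.1 < i} => (t.1 j.1).2.1),
        (fun j : {j : Fin n // j.1 < i} => (t.1 j.1).2.2.2),
        (fun j : {j : Fin n // i ≤ j} => (t.1 j.1).2.2.1)))
      (fun t => (fun j : {j : Fin n // j.1 < i} => (t.1 j.1).2.2.1)) (g i) (f i)
      (fun a b c => Eq.trans (by congr!) (hgf i a b c))
  have hmin := fun i : Fin n =>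
    haveI : Nonempty 𝒳h := ⟨Dec (fun j => (S ω0 j).2.2.1) (enc (fun j => (S ω0 j).1) (K ω0)) (K ω0) i⟩
    aux_min (pmass μ T) (fun t => (t.1 i).1)
      (fun t => (enc (fun j => (t.1 j).1) t.2, t.2,
        (fun j : {j : Fin n // j.1 < i} => (t.1 j.1).2.1),
        (fun j : {j : Fin n // j.1 < i} => (t.1 j.1).2.2.2),
        (fun j : {j : Fin n // i ≤ j} => (t.1 j.1).2.2.1)))
      (fun t => (fun j : {j : Fin n // j.1 < i} => (t.1 j.1).2.2.1)) (g i) (f i) (hf i)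
      (fun a b c => Eq.trans (by congr!) (hgf i a b c)) d
  choose φ hφ using hmin
  let ψ : (i : Fin n) →
        (𝒲 × ({j : Fin n // i < j} → 𝒴) × ({j : Fin n // j.1 < i} → 𝒵) ×
          ({j : Fin n // j.1 < i} → 𝒳) × 𝒦) × 𝒴 → 𝒳h := fun i u =>
    φ i (u.1.1, u.1.2.2.2.2, u.1.2.2.2.1, u.1.2.2.1,
      fun j => if hj : i < j.1 then u.1.2.1 ⟨j.1, hj⟩ else u.2)
  have hR := fun i : Fin n => aux_expVal_comp μ T hT
    (fun t => ((t.1 i).1, (fun j => (t.1 j).2.2.1), enc (fun j => (t.1 j).1) t.2, t.2))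
    (fun t => d t.1 (Dec t.2.1 t.2.2.1 t.2.2.2 i))
  have hL := fun i : Fin n => aux_expVal_comp μ T hT
    (fun t => ((t.1 i).1, (enc (fun j => (t.1 j).1) t.2,
          (fun j : {j : Fin n // i < j} => (t.1 j.1).2.2.1),
          (fun j : {j : Fin n // j.1 < i} => (t.1 j.1).2.2.2),
          (fun j : {j : Fin n // j.1 < i} => (t.1 j.1).2.1),
          t.2), (t.1 i).2.2.1))
    (fun t => d t.1 (ψ i (t.2.1, t.2.2)))
  have main : ∀ i : Fin n, ∑ t : τ, pmass μ T t * d (t.1 i).1 (ψ i ((enc (fun j => (t.1 j).1) t.2,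
          (fun j : {j : Fin n // i < j} => (t.1 j.1).2.2.1),
          (fun j : {j : Fin n // j.1 < i} => (t.1 j.1).2.2.2),
          (fun j : {j : Fin n // j.1 < i} => (t.1 j.1).2.1),
          t.2), (t.1 i).2.2.1)) ≤
      ∑ t : τ, pmass μ T t * d (t.1 i).1
        (Dec (fun j => (t.1 j).2.2.1) (enc (fun j => (t.1 j).1) t.2) t.2 i) := by
    intro i
    have h := hφ i (fun b c => Dec (fun j => if hj : j.1 < i then c ⟨j, hj⟩ else
      b.2.2.2.2 ⟨j, not_lt.mp hj⟩) b.1 b.2.1 i)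
    refine le_trans (le_of_eq ?_) (h.trans (le_of_eq ?_))
    · refine Finset.sum_congr rfl fun t _ => ?_
      simp only [ψ]
      have : (fun j : {j : Fin n // i ≤ j} => if hj : i < j.1 then (t.1 j.1).2.2.1
          else (t.1 i).2.2.1) = (fun j : {j : Fin n // i ≤ j} => (t.1 j.1).2.2.1) := by
        funext j
        split_ifs with hj
        · rfl
        · exact congrArg (fun m => (t.1 m).2.2.1) (le_antisymm j.2 (not_lt.mp hj))
      simp only [dite_eq_ite] at this ⊢
      rw [this]
    · refine Finset.sum_congr rfl fun t _ => ?_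
      simp
  refine ⟨ψ, fun i => ?_, ?_⟩
  · exact (hL i).trans_le ((main i).trans_eq (hR i).symm)
  · have hn : (0 : ℝ) ≤ 1 / (n : ℝ) := by positivity
    have e := aux_expVal_comp μ T hT id (fun sk => (1 / (n : ℝ)) * ∑ i, d ((sk.1 i).1)
          (Dec (fun j => (sk.1 j).2.2.1) (enc (fun j => (sk.1 j).1) sk.2) sk.2 i))
    refine ge_iff_le.mpr (le_trans ?_ (le_of_eq e.symm))
    refine le_trans (mul_le_mul_of_nonneg_left
      (Finset.sum_le_sum fun i _ => (hL i).trans_le (main i)) hn) (le_of_eq ?_)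
    rw [Finset.sum_comm, Finset.mul_sum]
    refine Finset.sum_congr rfl fun t _ => ?_
    simp only [id]
    rw [← Finset.mul_sum]
    ring
end
end
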